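/- Let M be an n×κ real matrix, α > 0 a real number, and R an invertible κ×κ real matrix satisfying RᵀR = MᵀM + α²I. Then for every s ∈ ℝ^κ and every w ∈ ℝⁿ, ‖−α² R⁻ᵀ s + R⁻ᵀ Mᵀ w‖ ≤ α‖s‖ + ‖w‖, where ‖·‖ denotes the Euclidean norm and R⁻ᵀ denotes the inverse of the transpose of R. -/

import Mathlib

/-!
Let `v` be the equivalent noise and `y = R⁻¹ v`. The identity `RᵀR = MᵀM + α²I` gives
`‖v‖² = ‖M y‖² + α² ‖y‖²`, so both `‖M y‖` and `α ‖y‖` are at most `‖v‖`; these are the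
contraction properties of `Q₁ = M R⁻¹` and `Q₂ = α R⁻¹`. On the other hand
`‖v‖² = ⟨y, Rᵀ v⟩ = -α² ⟨y, s⟩ + ⟨M y, w⟩`, which by Cauchy–Schwarz is at most
`‖v‖ (α ‖s‖ + ‖w‖)`.
-/

open Matrix

/-- Euclidean norm of a real vector. -/
noncomputable def euclNorm {k : ℕ} (x : Fin k → ℝ) : ℝ := Real.sqrt (∑ i, (x i) ^ 2)

lemma euclNorm_nonneg {k : ℕ} (x : Fin k → ℝ) : 0 ≤ euclNorm x := Real.sqrt_nonneg _

lemma euclNorm_sq {k : ℕ} (x : Fin k → ℝ) : euclNorm x ^ 2 = x ⬝ᵥ x := by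
  unfold euclNorm
  rw [Real.sq_sqrt (Finset.sum_nonneg fun i _ => sq_nonneg _)]
  simp [dotProduct, sq]

lemma abs_dotProduct_le_euclNorm {k : ℕ} (x y : Fin k → ℝ) :
    |x ⬝ᵥ y| ≤ euclNorm x * euclNorm y := by
  unfold euclNorm
  rw [← Real.sqrt_mul (Finset.sum_nonneg fun i _ => sq_nonneg _)]
  exact Real.abs_le_sqrt (Finset.sum_mul_sq_le_sq_mul_sq _ _ _)

/-- Bound on the equivalent noise of the MMSE-preprocessed decoder: if
`RᵀR = MᵀM + α²I` then `‖−α² R⁻ᵀ s + R⁻ᵀ Mᵀ w‖ ≤ α‖s‖ + ‖w‖`. -/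
theorem mmse_equivalent_noise_bound (n κ : ℕ)
    (M : Matrix (Fin n) (Fin κ) ℝ) (α : ℝ) (hα : 0 < α)
    (R : Matrix (Fin κ) (Fin κ) ℝ) (hR : IsUnit R.det)
    (h : Rᵀ * R = Mᵀ * M + α ^ 2 • (1 : Matrix (Fin κ) (Fin κ) ℝ)) :
    ∀ (s : Fin κ → ℝ) (w : Fin n → ℝ),
      euclNorm (-(α ^ 2) • (Rᵀ)⁻¹.mulVec s + (Rᵀ)⁻¹.mulVec (Mᵀ.mulVec w)) ≤
        α * euclNorm s + euclNorm w := by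
  intro s w
  have hRT : IsUnit Rᵀ.det := by rwa [det_transpose]
  set v := -(α ^ 2) • (Rᵀ)⁻¹.mulVec s + (Rᵀ)⁻¹.mulVec (Mᵀ.mulVec w) with hv
  have hRv : Rᵀ *ᵥ v = -(α ^ 2) • s + Mᵀ *ᵥ w := by
    rw [hv, mulVec_add, mulVec_smul, mulVec_mulVec, mulVec_mulVec, mul_nonsing_inv _ hRT,
      one_mulVec, one_mulVec]
  obtain ⟨y, hy⟩ : ∃ y, R *ᵥ y = v :=
    ⟨R⁻¹ *ᵥ v, by rw [mulVec_mulVec, mul_nonsing_inv _ hR, one_mulVec]⟩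
  have adj : ∀ {m : ℕ} (A : Matrix (Fin m) (Fin κ) ℝ) (z : Fin m → ℝ),
      y ⬝ᵥ (Aᵀ *ᵥ z) = (A *ᵥ y) ⬝ᵥ z := by
    intro m A z
    rw [dotProduct_mulVec, vecMul_transpose]
  have h1 : euclNorm v ^ 2 = euclNorm (M *ᵥ y) ^ 2 + α ^ 2 * euclNorm y ^ 2 := by
    simp only [euclNorm_sq]
    rw [← hy, ← adj R, mulVec_mulVec, h, add_mulVec, ← mulVec_mulVec, dotProduct_add, adj M,
      smul_mulVec, one_mulVec, dotProduct_smul, smul_eq_mul]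
  have h2 : euclNorm v ^ 2 = -(α ^ 2) * (y ⬝ᵥ s) + (M *ᵥ y) ⬝ᵥ w := by
    rw [euclNorm_sq]
    nth_rewrite 1 [← hy]
    rw [← adj R, hRv, dotProduct_add, adj M, dotProduct_smul, smul_eq_mul]
  have hv0 := euclNorm_nonneg v
  have hs0 := euclNorm_nonneg s
  have hw0 := euclNorm_nonneg w
  have hQ₁ : euclNorm (M *ᵥ y) ≤ euclNorm v :=
    abs_le_of_sq_le_sq' (by nlinarith [sq_nonneg (α * euclNorm y)]) hv0 |>.2
  have hQ₂ : α * euclNorm y ≤ euclNorm v :=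
    abs_le_of_sq_le_sq' (by nlinarith [sq_nonneg (euclNorm (M *ᵥ y))]) hv0 |>.2
  have hs : -(α ^ 2) * (y ⬝ᵥ s) ≤ euclNorm v * (α * euclNorm s) :=
    calc -(α ^ 2) * (y ⬝ᵥ s) ≤ α ^ 2 * (euclNorm y * euclNorm s) := by
          nlinarith [neg_le_of_abs_le (abs_dotProduct_le_euclNorm y s), sq_nonneg α]
      _ = (α * euclNorm y) * (α * euclNorm s) := by ring
      _ ≤ euclNorm v * (α * euclNorm s) := by gcongr
  have hw : (M *ᵥ y) ⬝ᵥ w ≤ euclNorm v * euclNorm w :=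
    (le_of_abs_le (abs_dotProduct_le_euclNorm _ w)).trans (by gcongr)
  rcases hv0.eq_or_lt with h0 | h0
  · rw [← h0]; positivity
  · exact le_of_mul_le_mul_left (by nlinarith) h0
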